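/- arXiv:2403.01566 — 2 statements merged into one kernel-verified Lean document; each statement's English description precedes it below -/
import Mathlib

section
/- Let t, r, k, k' be finite types, let G : Matrix t r ℝ, let U : Matrix t k ℝ satisfy Uᵀ · U = 1, and let V̂ : Matrix k k' ℝ be arbitrary. Set V := U · V̂. Then the squared Frobenius approximation errors decompose orthogonally: ‖G − V · Vᵀ · G‖_F² = ‖G − U · Uᵀ · G‖_F² + ‖Uᵀ·G − V̂ · V̂ᵀ · (Uᵀ·G)‖_F². -/
open Matrix

/-- The Frobenius norm of a real matrix: `(Σᵢⱼ M i j ^ 2)^{1/2}`. -/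
noncomputable def frobNorm {m n : Type*} [Fintype m] [Fintype n]
    (M : Matrix m n ℝ) : ℝ :=
  Real.sqrt (∑ i, ∑ j, (M i j) ^ 2)

theorem frobNorm_sq_eq_trace {m n : Type*} [Fintype m] [Fintype n]
    (M : Matrix m n ℝ) : frobNorm M ^ 2 = (Mᵀ * M).trace := by
  unfold frobNorm
  have h : 0 ≤ ∑ i, ∑ j, (M i j) ^ 2 :=
    Finset.sum_nonneg fun i _ => Finset.sum_nonneg fun j _ => sq_nonneg _
  rw [Real.sq_sqrt h, Finset.sum_comm]
  simp [Matrix.trace, Matrix.mul_apply, sq]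

theorem error_decomposition
    {t r k k' : Type*} [Fintype t] [Fintype r] [Fintype k] [Fintype k']
    [DecidableEq k]
    (G : Matrix t r ℝ) (U : Matrix t k ℝ) (hU : Uᵀ * U = 1)
    (Vhat : Matrix k k' ℝ) :
    frobNorm (G - (U * Vhat) * (U * Vhat)ᵀ * G) ^ 2 =
      frobNorm (G - U * Uᵀ * G) ^ 2 +
      frobNorm (Uᵀ * G - Vhat * Vhatᵀ * (Uᵀ * G)) ^ 2 := by
  have hA : Uᵀ * (G - U * Uᵀ * G) = 0 := by
    rw [Matrix.mul_sub, Matrix.mul_assoc U, ← Matrix.mul_assoc Uᵀ U, hU, Matrix.one_mul, sub_self]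
  have hS : G - (U * Vhat) * (U * Vhat)ᵀ * G =
      (G - U * Uᵀ * G) + U * (Uᵀ * G - Vhat * Vhatᵀ * (Uᵀ * G)) := by
    simp only [Matrix.transpose_mul, Matrix.mul_sub, Matrix.mul_assoc]
    abel
  rw [hS]
  generalize G - U * Uᵀ * G = A at *
  generalize Uᵀ * G - Vhat * Vhatᵀ * (Uᵀ * G) = B at *
  have hA' : Aᵀ * U = 0 := by
    have := congrArg Matrix.transpose hA
    simpa [Matrix.transpose_mul] using this
  rw [frobNorm_sq_eq_trace, frobNorm_sq_eq_trace, frobNorm_sq_eq_trace, ← Matrix.trace_add]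
  congr 1
  rw [Matrix.transpose_add, Matrix.transpose_mul, Matrix.add_mul, Matrix.mul_add, Matrix.mul_add,
    ← Matrix.mul_assoc Aᵀ, hA', Matrix.mul_assoc Bᵀ, hA, Matrix.mul_assoc Bᵀ,
    ← Matrix.mul_assoc Uᵀ, hU]
  simp
end

section
/- Let t, r, k be finite types, let G : Matrix t r ℝ, and let V : Matrix t k ℝ satisfy Vᵀ · V = 1. Then for every matrix N : Matrix k r ℝ, ‖G − V · Vᵀ · G‖_F ≤ ‖G − V · N‖_F, i.e., V·Vᵀ·G is a best approximation of G in Frobenius norm among all matrices whose columns lie in the range of V. -/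
open Matrix

theorem projection_best_approximation
    {t r k : Type*} [Fintype t] [Fintype r] [Fintype k] [DecidableEq k]
    (G : Matrix t r ℝ) (V : Matrix t k ℝ) (hV : Vᵀ * V = 1) :
    ∀ N : Matrix k r ℝ, frobNorm (G - V * Vᵀ * G) ≤ frobNorm (G - V * N) := by
  intro N
  have h1 : Vᵀ * (G - V * Vᵀ * G) = 0 := by
    rw [Matrix.mul_sub, Matrix.mul_assoc, ← Matrix.mul_assoc Vᵀ, hV, Matrix.one_mul, sub_self]
  have h2 : G - V * N = (G - V * Vᵀ * G) + V * (Vᵀ * G - N) := by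
    rw [Matrix.mul_sub, Matrix.mul_assoc]; abel
  rw [h2]
  generalize G - V * Vᵀ * G = R at h1
  generalize Vᵀ * G - N = D
  have h3 : ∑ i, ∑ j, R i j * (V * D) i j = 0 := by
    have h4 : ((V * D)ᵀ * R).trace = 0 := by
      rw [Matrix.transpose_mul, Matrix.mul_assoc, h1]; simp
    rw [Finset.sum_comm, ← h4]
    simp only [Matrix.trace, Matrix.diag_apply, Matrix.mul_apply (M := (V * D)ᵀ),
      Matrix.transpose_apply]
    exact Finset.sum_congr rfl fun j _ => Finset.sum_congr rfl fun i _ => mul_comm _ _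
  unfold frobNorm
  apply Real.sqrt_le_sqrt
  have h5 : ∑ i, ∑ j, ((R + V * D) i j) ^ 2 = ∑ i, ∑ j, (R i j) ^ 2
      + 2 * ∑ i, ∑ j, R i j * (V * D) i j + ∑ i, ∑ j, ((V * D) i j) ^ 2 := by
    simp only [Finset.mul_sum, ← Finset.sum_add_distrib, Matrix.add_apply]
    exact Finset.sum_congr rfl fun i _ => Finset.sum_congr rfl fun j _ => by ring
  have h6 : 0 ≤ ∑ i, ∑ j, ((V * D) i j) ^ 2 := by positivity
  rw [h5, h3]
  linarith
end
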